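/- Let ρ ∈ (0, 1), t₀ > 1, λ > 1, and σ ∈ (0, 1). Then the function σ ↦ E_ρ(−λ^σ t₀^ρ) is differentiable at σ and its derivative satisfies d/dσ E_ρ(−λ^σ t₀^ρ) < −(ln λ)/(λ^σ t₀^ρ Γ(1−ρ)) + (5 ln λ)/(λ^{2σ} t₀^ρ). -/

import Mathlib

open Set Real

/-- The Mittag-Leffler function `E_ρ(z) = ∑_{k=0}^∞ z^k / Γ(ρk + 1)`. -/
noncomputable def mittagLeffler (ρ z : ℝ) : ℝ := ∑' k : ℕ, z ^ k / Real.Gamma (ρ * k + 1)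

/-! The derivative of `E_ρ` is `E_{ρ,ρ} / ρ`, so the claim is a lower bound for `E_{ρ,ρ}(-X)` with
`X = λ ^ σ t₀ ^ ρ`. Hankel's formula writes each `1 / Γ(ρk + ρ)` as an integral over a contour
around the negative real axis; summing a geometric series under the integral represents
`E_{ρ,ρ}(-X)` by the integrand `exp ζ / (ζ ^ ρ + X)`, and since its denominator does not vanish on
the slit plane, the contour can be collapsed onto the cut. This gives
`E_{ρ,ρ}(-X) = sin (πρ) / π * ∫ e^{-r} r^ρ / |r^ρ e^{iπρ} + X|² dr` over `r > 0`. The density is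
bounded below by `e^{-r} r^ρ / (r^ρ + X)²`, where `1 / (1 + y)² ≥ 1 - 2y` for `y = r^ρ / X`; the two
resulting Gamma integrals are the leading term, by the reflection formula, and the error term.

All contour integrals are taken in the coordinate `w = log ζ`, which turns the slit plane into the
strip `|Im w| ≤ π` and multivalued powers of `ζ` into entire functions of `w`. -/

section

open MeasureTheory Filter Topology
open Complex (I)
open scoped Complex Interval

/-! ### Contour integrals around the cut -/

/-- The closed strip `|Im w| ≤ π`: in the coordinate `w = log ζ`, the plane slit along the negative
real axis together with both edges of the cut. -/
def slitStrip : Set ℂ := Complex.im ⁻¹' Icc (-π) π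

/-- The jump `F (x + iπ) - F (x - iπ)` between the edges of the strip: in the coordinate
`w = log ζ`, the jump across the negative real axis at `ζ = -exp x`. -/
noncomputable def edgeJump (F : ℂ → ℂ) (x : ℝ) : ℂ := F (x + π * I) - F (x - π * I)

/-- The integral of `F` along a Hankel contour, in the coordinate `w = log ζ`: the circle
`|ζ| = exp c` becomes the segment from `c - iπ` to `c + iπ`, and the two edges of the cut outside
that circle become the horizontal rays issuing from the ends of the segment. -/
noncomputable def hankelIntegral (F : ℂ → ℂ) (c : ℝ) : ℂ :=
  I * (∫ y in (-π)..π, F (c + y * I)) + ∫ x in Ioi c, edgeJump F x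

/-- The filter of approach to `-∞` within the strip, that is, to the origin of the slit plane. -/
def slitStripAtBot : Filter ℂ := comap Complex.re atBot ⊓ 𝓟 slitStrip

variable {F : ℂ → ℂ} {c : ℝ}

lemma add_mul_I_mem_slitStrip (x : ℝ) {y : ℝ} (hy : y ∈ Icc (-π) π) :
    (x + y * I : ℂ) ∈ slitStrip := by
  simpa [slitStrip] using hy

lemma add_pi_mul_I_mem_slitStrip (x : ℝ) : (x + π * I : ℂ) ∈ slitStrip :=
  add_mul_I_mem_slitStrip x ⟨neg_le_self pi_nonneg, le_rfl⟩

lemma sub_pi_mul_I_mem_slitStrip (x : ℝ) : (x - π * I : ℂ) ∈ slitStrip := by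
  simpa [sub_eq_add_neg] using
    add_mul_I_mem_slitStrip x (y := -π) ⟨le_rfl, neg_le_self pi_nonneg⟩

lemma continuous_upper_edge (hF : ContinuousOn F slitStrip) :
    Continuous fun x : ℝ => F (x + π * I) :=
  hF.comp_continuous (by fun_prop) add_pi_mul_I_mem_slitStrip

lemma continuous_lower_edge (hF : ContinuousOn F slitStrip) :
    Continuous fun x : ℝ => F (x - π * I) :=
  hF.comp_continuous (by fun_prop) sub_pi_mul_I_mem_slitStrip

lemma continuous_edgeJump (hF : ContinuousOn F slitStrip) : Continuous (edgeJump F) :=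
  (continuous_upper_edge hF).sub (continuous_lower_edge hF)

lemma intervalIntegral_edgeJump_eq (hF : DifferentiableOn ℂ F slitStrip) (a b : ℝ) :
    ∫ x in a..b, edgeJump F x =
      I * (∫ y in (-π)..π, F (b + y * I)) - I * ∫ y in (-π)..π, F (a + y * I) := by
  have hrect : [[a, b]] ×ℂ [[-π, π]] ⊆ slitStrip := by
    intro w hw
    simpa only [slitStrip, uIcc_of_le (neg_le_self pi_nonneg)] using hw.2
  have hcauchy := Complex.integral_boundary_rect_eq_zero_of_differentiableOn F
    ⟨a, -π⟩ ⟨b, π⟩ (hF.mono hrect)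
  simp only [smul_eq_mul, Complex.ofReal_neg, neg_mul, ← sub_eq_add_neg] at hcauchy
  have hsub := intervalIntegral.integral_sub
    ((continuous_upper_edge hF.continuousOn).intervalIntegrable (μ := volume) a b)
    ((continuous_lower_edge hF.continuousOn).intervalIntegrable a b)
  simp only [edgeJump]
  linear_combination hsub - hcauchy

lemma hankelIntegral_eq_of_le (hF : DifferentiableOn ℂ F slitStrip) {c' : ℝ} (hc : c' ≤ c)
    (hJ : IntegrableOn (edgeJump F) (Ioi c)) : hankelIntegral F c = hankelIntegral F c' := by
  have hsplit : ∫ x in Ioi c', edgeJump F x =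
      (∫ x in c'..c, edgeJump F x) + ∫ x in Ioi c, edgeJump F x := by
    rw [intervalIntegral.integral_of_le hc, ← Ioc_union_Ioi_eq_Ioi hc]
    exact setIntegral_union (Ioc_disjoint_Ioi le_rfl) measurableSet_Ioi
      (continuous_edgeJump hF.continuousOn).integrableOn_Ioc hJ
  rw [hankelIntegral, hankelIntegral, hsplit, intervalIntegral_edgeJump_eq hF]
  ring

lemma tendsto_intervalIntegral_vertical (hF : ContinuousOn F slitStrip) {L : ℂ}
    (hL : Tendsto F slitStripAtBot (𝓝 L)) :
    Tendsto (fun c : ℝ => ∫ y in (-π)..π, F (c + y * I)) atBot (𝓝 (2 * π * L)) := by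
  have huIcc : [[-π, π]] = Icc (-π) π := uIcc_of_le (neg_le_self pi_nonneg)
  have hline : Tendsto (fun p : ℝ × ℝ => (p.1 + p.2 * I : ℂ)) (atBot ×ˢ 𝓟 (Icc (-π) π))
      slitStripAtBot := by
    refine tendsto_inf.2 ⟨tendsto_comap_iff.2 ?_, tendsto_principal.2 ?_⟩
    · simpa [Function.comp_def] using tendsto_fst
    · filter_upwards [prod_mem_prod univ_mem (mem_principal_self _)] with p hp
      exact add_mul_I_mem_slitStrip p.1 hp.2
  have hunif : TendstoUniformlyOn (fun (c : ℝ) (y : ℝ) => F (c + y * I)) (fun _ => L) atBot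
      [[-π, π]] := by
    rw [huIcc]
    exact tendsto_prod_principal_iff.1 (hL.comp hline)
  have hlim := hunif.tendsto_intervalIntegral_of_continuousOn (μ := volume) (.of_forall fun c =>
    hF.comp (by fun_prop) fun y hy => add_mul_I_mem_slitStrip c (huIcc ▸ hy))
  have hval : ∫ _ in (-π)..π, L = 2 * π * L := by
    rw [intervalIntegral.integral_const, Complex.real_smul]
    push_cast
    ring
  rw [← hval]
  exact hlim

lemma hankelIntegral_eq_of_tendsto (hF : DifferentiableOn ℂ F slitStrip)
    (hJ : Integrable (edgeJump F)) {L : ℂ} (hL : Tendsto F slitStripAtBot (𝓝 L)) :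
    hankelIntegral F c = 2 * π * I * L + ∫ x, edgeJump F x := by
  have hlim : Tendsto (hankelIntegral F) atBot
      (𝓝 (I * (2 * π * L) + ∫ x, edgeJump F x)) :=
    ((tendsto_intervalIntegral_vertical hF.continuousOn hL).const_mul I).add
      ((aecover_Ioi tendsto_id).integral_tendsto_of_countably_generated hJ)
  have hconst : ∀ᶠ c' in atBot, hankelIntegral F c' = hankelIntegral F c := by
    filter_upwards [eventually_le_atBot c] with c' hc'
    exact (hankelIntegral_eq_of_le hF hc' hJ.integrableOn).symm
  rw [tendsto_nhds_unique (tendsto_const_nhds.congr' (hconst.mono fun _ => Eq.symm)) hlim]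
  ring

lemma edgeJump_const_mul (z : ℂ) (F : ℂ → ℂ) :
    edgeJump (fun w => z * F w) = fun x => z * edgeJump F x :=
  funext fun _ => (mul_sub _ _ _).symm

lemma edgeJump_sub (F G : ℂ → ℂ) :
    edgeJump (fun w => F w - G w) = fun x => edgeJump F x - edgeJump G x :=
  funext fun _ => sub_sub_sub_comm _ _ _ _

lemma hankelIntegral_const_mul (z : ℂ) (F : ℂ → ℂ) (c : ℝ) :
    hankelIntegral (fun w => z * F w) c = z * hankelIntegral F c := by
  simp only [hankelIntegral, edgeJump_const_mul, intervalIntegral.integral_const_mul,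
    integral_const_mul]
  ring

lemma hankelIntegral_sub {G : ℂ → ℂ} (hF : Continuous F) (hG : Continuous G)
    (hJF : IntegrableOn (edgeJump F) (Ioi c)) (hJG : IntegrableOn (edgeJump G) (Ioi c)) :
    hankelIntegral (fun w => F w - G w) c = hankelIntegral F c - hankelIntegral G c := by
  have hline : Continuous fun y : ℝ => (c + y * I : ℂ) := by fun_prop
  have hsegment : ∫ y in (-π)..π, (F (c + y * I) - G (c + y * I)) =
      (∫ y in (-π)..π, F (c + y * I)) - ∫ y in (-π)..π, G (c + y * I) :=
    intervalIntegral.integral_sub ((hF.comp hline).intervalIntegrable _ _)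
      ((hG.comp hline).intervalIntegrable _ _)
  simp only [hankelIntegral, edgeJump_sub, integral_sub hJF hJG, hsegment]
  ring

lemma hankelIntegral_eq_zero_of_hasDerivAt {f : ℂ → ℂ} (hf : ∀ w, HasDerivAt f (F w) w)
    (hF : Continuous F) (hJ : IntegrableOn (edgeJump F) (Ioi c))
    (hlim : Tendsto (edgeJump f) atTop (𝓝 0)) : hankelIntegral F c = 0 := by
  have hsegment : (∫ y in (-π)..π, F (c + y * I) * I) = edgeJump f c := by
    have hderiv (y : ℝ) : HasDerivAt (fun y : ℝ => f (c + y * I)) (F (c + y * I) * I) y :=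
      (hf _).comp y (by simpa using ((hasDerivAt_id y).ofReal_comp.mul_const I).const_add (c : ℂ))
    rw [intervalIntegral.integral_eq_sub_of_hasDerivAt (fun y _ => hderiv y)
      (Continuous.intervalIntegrable (by fun_prop) _ _), edgeJump]
    push_cast
    ring_nf
  have hrays : ∫ x in Ioi c, edgeJump F x = 0 - edgeJump f c := by
    refine integral_Ioi_of_hasDerivAt_of_tendsto' (fun x _ => ?_) hJ hlim
    have hid : HasDerivAt (fun x : ℝ => (x : ℂ)) 1 x := (hasDerivAt_id x).ofReal_comp
    have hupper := (hf (x + π * I)).comp x (hid.add_const (π * I))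
    have hlower := (hf (x - π * I)).comp x (hid.sub_const (π * I))
    exact (hupper.sub hlower).congr_deriv (by rw [mul_one, mul_one, edgeJump])
  rw [hankelIntegral, hrays, ← hsegment, intervalIntegral.integral_mul_const]
  ring

/-! ### Hankel's formula -/

section ExpSubstitution

variable {E : Type*} [NormedAddCommGroup E] [NormedSpace ℝ E] (g : ℝ → E)

lemma integral_exp_smul_comp_exp : ∫ x, rexp x • g (rexp x) = ∫ r in Ioi 0, g r := by
  have hsubst := integral_image_eq_integral_abs_deriv_smul MeasurableSet.univ
    (fun x _ => (Real.hasDerivAt_exp x).hasDerivWithinAt) Real.exp_injective.injOn g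
  simpa [image_univ, Real.range_exp] using hsubst.symm

lemma integrable_exp_smul_comp_exp_iff :
    Integrable (fun x => rexp x • g (rexp x)) ↔ IntegrableOn g (Ioi 0) := by
  have hsubst := integrableOn_image_iff_integrableOn_abs_deriv_smul MeasurableSet.univ
    (fun x _ => (Real.hasDerivAt_exp x).hasDerivWithinAt) Real.exp_injective.injOn g
  simpa [image_univ, Real.range_exp] using hsubst.symm

end ExpSubstitution

lemma cexp_neg_exp_add_mul_eq (b : ℂ) (x : ℝ) :
    cexp (-rexp x + b * x) = rexp x • (rexp (-rexp x) * (rexp x : ℂ) ^ (b - 1)) := by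
  rw [Complex.cpow_def_of_ne_zero (by exact_mod_cast (exp_pos x).ne'),
    ← Complex.ofReal_log (exp_pos x).le, Real.log_exp, Complex.real_smul]
  push_cast
  rw [← Complex.exp_add, ← Complex.exp_add]
  ring_nf

lemma integrable_cexp_neg_exp_add_mul {b : ℂ} (hb : 0 < b.re) :
    Integrable fun x : ℝ => cexp (-rexp x + b * x) := by
  simp_rw [cexp_neg_exp_add_mul_eq]
  exact (integrable_exp_smul_comp_exp_iff _).2 (Complex.GammaIntegral_convergent hb)

lemma integral_cexp_neg_exp_add_mul {b : ℂ} (hb : 0 < b.re) :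
    ∫ x : ℝ, cexp (-rexp x + b * x) = Complex.Gamma b := by
  simp_rw [cexp_neg_exp_add_mul_eq]
  rw [integral_exp_smul_comp_exp fun r : ℝ => (rexp (-r) * (r : ℂ) ^ (b - 1)),
    Complex.Gamma_eq_integral hb, Complex.GammaIntegral]

lemma tendsto_cexp_neg_exp_add_mul_atTop (b : ℂ) :
    Tendsto (fun x : ℝ => cexp (-rexp x + b * x)) atTop (𝓝 0) := by
  rw [tendsto_zero_iff_norm_tendsto_zero]
  refine ((tendsto_rpow_mul_exp_neg_mul_atTop_nhds_zero b.re 1 one_pos).comp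
    tendsto_exp_atTop).congr fun x => ?_
  rw [Function.comp_apply, ← Real.exp_mul, ← Real.exp_add, Complex.norm_exp, Complex.add_re,
    Complex.neg_re, Complex.re_mul_ofReal, Complex.ofReal_re]
  ring_nf

lemma integrableOn_cexp_neg_exp_add_mul (b : ℂ) (c : ℝ) :
    IntegrableOn (fun x : ℝ => cexp (-rexp x + b * x)) (Ioi c) := by
  have hcont : Continuous fun x : ℝ => cexp (-rexp x + b * x) := by fun_prop
  have hbound : (fun x : ℝ => cexp (-rexp x + b * x)) =O[atTop] fun x => rexp (-1 * x) := by
    have hmul := ((tendsto_cexp_neg_exp_add_mul_atTop (b + 1)).isBigO_one ℝ).mul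
      (Complex.isBigO_ofReal_left.2 (Asymptotics.isBigO_refl (fun x : ℝ => rexp (-1 * x)) atTop))
    refine hmul.congr (fun x => ?_) fun x => one_mul _
    push_cast
    rw [← Complex.exp_add]
    ring_nf
  exact (integrable_norm_iff hcont.aestronglyMeasurable).1
    (integrable_of_isBigO_exp_neg one_pos hcont.norm.continuousOn hbound.norm_left)

lemma cexp_add_pi_mul_I (x : ℝ) : cexp (x + π * I) = -rexp x := by
  rw [Complex.exp_add_pi_mul_I, Complex.ofReal_exp]

lemma cexp_sub_pi_mul_I (x : ℝ) : cexp (x - π * I) = -rexp x := by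
  rw [Complex.exp_sub_pi_mul_I, Complex.ofReal_exp]

/-- The integrand `exp ζ · ζ ^ (-a) dζ` of Hankel's formula for `1 / Γ(a)`, in the coordinate
`w = log ζ`. -/
noncomputable def hankelKernel (a w : ℂ) : ℂ := cexp (cexp w + (1 - a) * w)

lemma differentiable_hankelKernel (a : ℂ) : Differentiable ℂ (hankelKernel a) := by
  unfold hankelKernel
  fun_prop

lemma hankelKernel_add_pi_mul_I (a : ℂ) (x : ℝ) :
    hankelKernel a (x + π * I) = cexp (-rexp x + (1 - a) * x) * cexp ((1 - a) * π * I) := by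
  rw [hankelKernel, cexp_add_pi_mul_I, ← Complex.exp_add]
  ring_nf

lemma hankelKernel_sub_pi_mul_I (a : ℂ) (x : ℝ) :
    hankelKernel a (x - π * I) = cexp (-rexp x + (1 - a) * x) * cexp (-((1 - a) * π) * I) := by
  rw [hankelKernel, cexp_sub_pi_mul_I, ← Complex.exp_add]
  ring_nf

lemma edgeJump_hankelKernel (a : ℂ) (x : ℝ) :
    edgeJump (hankelKernel a) x =
      cexp (-rexp x + (1 - a) * x) * (2 * Complex.sin (π * a) * I) := by
  have hsin : Complex.sin (π * a) = Complex.sin ((1 - a) * π) := by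
    rw [← Complex.sin_pi_sub]
    ring_nf
  rw [edgeJump, hankelKernel_add_pi_mul_I, hankelKernel_sub_pi_mul_I, hsin, Complex.sin]
  linear_combination cexp (-rexp x + (1 - a) * x) *
    (cexp ((1 - a) * π * I) - cexp (-((1 - a) * π) * I)) * Complex.I_mul_I

lemma integrableOn_edgeJump_hankelKernel (a : ℂ) (c : ℝ) :
    IntegrableOn (edgeJump (hankelKernel a)) (Ioi c) := by
  simp_rw [IntegrableOn, funext (edgeJump_hankelKernel a)]
  exact (integrableOn_cexp_neg_exp_add_mul (1 - a) c).mul_const _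

lemma hankelKernel_eq_mul (a w : ℂ) : hankelKernel a w = cexp (cexp w) * cexp ((1 - a) * w) :=
  Complex.exp_add _ _

lemma tendsto_cexp_cexp_slitStripAtBot :
    Tendsto (fun w => cexp (cexp w)) slitStripAtBot (𝓝 1) := by
  have hexp := (Complex.continuous_exp.tendsto 0).comp
    (Complex.tendsto_exp_comap_re_atBot.mono_left (inf_le_left (b := 𝓟 slitStrip)))
  rwa [Complex.exp_zero] at hexp

lemma tendsto_cexp_mul_slitStripAtBot {b : ℂ} (hb : 0 < b.re) :
    Tendsto (fun w => cexp (b * w)) slitStripAtBot (𝓝 0) := by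
  rw [Complex.tendsto_exp_nhds_zero_iff]
  have hre : Tendsto (fun w : ℂ => b.re * w.re + |b.im| * π) slitStripAtBot atBot :=
    tendsto_atBot_add_const_right _ _
      ((tendsto_comap.mono_left inf_le_left).const_mul_atBot hb)
  refine tendsto_atBot_mono' _ ?_ hre
  filter_upwards [mem_inf_of_right (mem_principal_self _)] with w hw
  have him : -(b.im * w.im) ≤ |b.im| * π := by
    refine (neg_le_abs _).trans ?_
    rw [abs_mul]
    gcongr
    exact abs_le.2 hw
  rw [Complex.mul_re]
  linarith

lemma tendsto_hankelKernel_of_re_lt_one {a : ℂ} (ha : a.re < 1) :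
    Tendsto (hankelKernel a) slitStripAtBot (𝓝 0) := by
  simp_rw [funext (hankelKernel_eq_mul a)]
  simpa using tendsto_cexp_cexp_slitStripAtBot.mul
    (tendsto_cexp_mul_slitStripAtBot (b := 1 - a) (by simpa using ha))

lemma hankelIntegral_hankelKernel_one (c : ℝ) :
    hankelIntegral (hankelKernel 1) c = 2 * π * I := by
  have hjump : edgeJump (hankelKernel 1) = 0 := by
    funext x
    simp [edgeJump_hankelKernel]
  have hlim : Tendsto (hankelKernel 1) slitStripAtBot (𝓝 1) := by
    refine tendsto_cexp_cexp_slitStripAtBot.congr fun w => ?_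
    rw [hankelKernel, sub_self, zero_mul, add_zero]
  rw [hankelIntegral_eq_of_tendsto (differentiable_hankelKernel 1).differentiableOn
    (hjump ▸ integrable_zero ℝ ℂ volume) hlim, hjump]
  simp

lemma two_pi_mul_inv_Gamma (a : ℂ) (ha : a.re < 1) :
    2 * π * (Complex.Gamma a)⁻¹ = 2 * Complex.sin (π * a) * Complex.Gamma (1 - a) := by
  have hne : Complex.Gamma (1 - a) ≠ 0 :=
    Complex.Gamma_ne_zero_of_re_pos (by simpa using ha)
  have hrefl := congrArg (·⁻¹) (Complex.Gamma_mul_Gamma_one_sub a)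
  simp only [mul_inv, inv_div] at hrefl
  field_simp at hrefl
  rw [mul_comm (π : ℂ) a]
  linear_combination 2 * hrefl

lemma hankelIntegral_hankelKernel_of_re_lt_one {a : ℂ} (ha : a.re < 1) (c : ℝ) :
    hankelIntegral (hankelKernel a) c = 2 * π * I * (Complex.Gamma a)⁻¹ := by
  have hre : 0 < (1 - a).re := by simpa using ha
  have hjump : Integrable (edgeJump (hankelKernel a)) := by
    simp_rw [funext (edgeJump_hankelKernel a)]
    exact (integrable_cexp_neg_exp_add_mul hre).mul_const _
  rw [hankelIntegral_eq_of_tendsto (differentiable_hankelKernel a).differentiableOn hjump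
    (tendsto_hankelKernel_of_re_lt_one ha)]
  simp_rw [edgeJump_hankelKernel]
  rw [integral_mul_const, integral_cexp_neg_exp_add_mul hre]
  linear_combination -I * two_pi_mul_inv_Gamma a ha

lemma hasDerivAt_hankelKernel_add_one (a w : ℂ) :
    HasDerivAt (hankelKernel (a + 1)) (hankelKernel a w - a * hankelKernel (a + 1) w) w := by
  have hexponent : HasDerivAt (fun w => cexp w + (1 - (a + 1)) * w) (cexp w + (1 - (a + 1))) w := by
    simpa only [mul_one] using
      (Complex.hasDerivAt_exp w).fun_add ((hasDerivAt_id' w).const_mul (1 - (a + 1)))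
  refine hexponent.cexp.congr_deriv ?_
  have hshift : hankelKernel a w = hankelKernel (a + 1) w * cexp w := by
    rw [hankelKernel, hankelKernel, ← Complex.exp_add]
    ring_nf
  rw [hshift, hankelKernel]
  ring

lemma hankelIntegral_hankelKernel_eq_mul (a : ℂ) (c : ℝ) :
    hankelIntegral (hankelKernel a) c = a * hankelIntegral (hankelKernel (a + 1)) c := by
  have hcont : Continuous (hankelKernel a) := (differentiable_hankelKernel a).continuous
  have hcont' : Continuous fun w => a * hankelKernel (a + 1) w :=
    (differentiable_hankelKernel (a + 1)).continuous.const_mul a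
  have hint := integrableOn_edgeJump_hankelKernel a c
  have hint' : IntegrableOn (edgeJump fun w => a * hankelKernel (a + 1) w) (Ioi c) := by
    rw [edgeJump_const_mul]
    exact (integrableOn_edgeJump_hankelKernel (a + 1) c).const_mul a
  have hlim : Tendsto (edgeJump (hankelKernel (a + 1))) atTop (𝓝 0) := by
    simp_rw [funext (edgeJump_hankelKernel (a + 1))]
    simpa using (tendsto_cexp_neg_exp_add_mul_atTop (1 - (a + 1))).mul_const
      (2 * Complex.sin (π * (a + 1)) * I)
  have hzero := hankelIntegral_eq_zero_of_hasDerivAt (c := c)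
    (hasDerivAt_hankelKernel_add_one a) (hcont.sub hcont')
    (by rw [edgeJump_sub]; exact hint.sub hint') hlim
  rwa [hankelIntegral_sub hcont hcont' hint hint', hankelIntegral_const_mul, sub_eq_zero] at hzero

theorem hankelIntegral_hankelKernel (a : ℂ) (c : ℝ) :
    hankelIntegral (hankelKernel a) c = 2 * π * I * (Complex.Gamma a)⁻¹ := by
  suffices ∀ (n : ℕ) (a : ℂ), a.re < n + 1 →
      hankelIntegral (hankelKernel a) c = 2 * π * I * (Complex.Gamma a)⁻¹ by
    obtain ⟨n, hn⟩ := exists_nat_gt a.re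
    exact this n a (hn.trans (lt_add_one _))
  intro n
  induction n with
  | zero =>
    intro a ha
    exact hankelIntegral_hankelKernel_of_re_lt_one (by simpa using ha) c
  | succ n ih =>
    intro a ha
    rcases eq_or_ne a 1 with rfl | hne
    · rw [hankelIntegral_hankelKernel_one, Complex.Gamma_one, inv_one, mul_one]
    · have hrec := ih (a - 1) (by push_cast at ha; simp; linarith)
      rw [hankelIntegral_hankelKernel_eq_mul,
        Complex.one_div_Gamma_eq_self_mul_one_div_Gamma_add_one, sub_add_cancel] at hrec
      exact mul_left_cancel₀ (sub_ne_zero.2 hne) (by linear_combination hrec)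

/-! ### The Hankel representation of the Mittag-Leffler function -/

theorem hasSum_hankelIntegral_geometric {q : ℂ → ℂ} {r : ℝ} (hF : Continuous F)
    (hq : Continuous q) (hr : r < 1) (hqr : ∀ w : ℂ, c ≤ w.re → ‖q w‖ ≤ r)
    (hupper : IntegrableOn (fun x : ℝ => F (x + π * I)) (Ioi c))
    (hlower : IntegrableOn (fun x : ℝ => F (x - π * I)) (Ioi c)) :
    HasSum (fun k : ℕ => hankelIntegral (fun w => q w ^ k * F w) c)
      (hankelIntegral (fun w => F w / (1 - q w)) c) := by
  have hr₀ : 0 ≤ r := (norm_nonneg _).trans (hqr c (by simp))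
  have hgeom : Summable fun k : ℕ => r ^ k := summable_geometric_of_lt_one hr₀ hr
  have hsum (w : ℂ) (hw : c ≤ w.re) :
      HasSum (fun k : ℕ => q w ^ k * F w) (F w / (1 - q w)) := by
    simpa only [div_eq_inv_mul] using
      (hasSum_geometric_of_norm_lt_one ((hqr w hw).trans_lt hr)).mul_right (F w)
  have hbound (k : ℕ) (w : ℂ) (hw : c ≤ w.re) : ‖q w ^ k * F w‖ ≤ r ^ k * ‖F w‖ := by
    rw [norm_mul, norm_pow]
    gcongr
    exact hqr w hw
  have hcont (k : ℕ) : Continuous fun w => q w ^ k * F w := (hq.pow k).mul hF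
  have hedges (x : ℝ) (hx : x ∈ Ioi c) :
      c ≤ (x + π * I : ℂ).re ∧ c ≤ (x - π * I : ℂ).re := by
    simpa using le_of_lt hx
  refine HasSum.add (HasSum.mul_left _ ?_) ?_
  · refine intervalIntegral.hasSum_integral_of_dominated_convergence
      (fun k y => r ^ k * ‖F (c + y * I)‖) (fun k => ?_) (fun k => ?_) ?_ ?_ ?_
    · exact ((hcont k).comp (by fun_prop)).aestronglyMeasurable
    · exact .of_forall fun y _ => hbound k _ (by simp)
    · exact .of_forall fun y _ => hgeom.mul_right _
    · simp_rw [tsum_mul_right]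
      exact Continuous.intervalIntegrable (by fun_prop) _ _
    · exact .of_forall fun y _ => hsum _ (by simp)
  · refine hasSum_integral_of_dominated_convergence
      (fun k x => r ^ k * (‖F (x + π * I)‖ + ‖F (x - π * I)‖)) (fun k => ?_) (fun k => ?_) ?_ ?_ ?_
    · exact (continuous_edgeJump (hcont k).continuousOn).aestronglyMeasurable
    · filter_upwards [ae_restrict_mem measurableSet_Ioi] with x hx
      rw [mul_add]
      exact (norm_sub_le _ _).trans
        (add_le_add (hbound k _ (hedges x hx).1) (hbound k _ (hedges x hx).2))
    · exact .of_forall fun x => hgeom.mul_right _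
    · simp_rw [tsum_mul_right]
      exact (hupper.norm.add hlower.norm).const_mul _
    · filter_upwards [ae_restrict_mem measurableSet_Ioi] with x hx
      exact (hsum _ (hedges x hx).1).sub (hsum _ (hedges x hx).2)

/-- The integrand `exp ζ · ζ ^ (ρ - β) / (ζ ^ ρ - z) dζ` of the Hankel representation of the
two-parameter Mittag-Leffler function, in the coordinate `w = log ζ`. -/
noncomputable def mittagLefflerKernel (ρ : ℝ) (β z w : ℂ) : ℂ :=
  hankelKernel (β - ρ) w / (cexp (ρ * w) - z)

lemma mittagLefflerKernel_eq_div_one_sub (ρ : ℝ) (β z w : ℂ) :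
    mittagLefflerKernel ρ β z w = hankelKernel β w / (1 - z * cexp (-(ρ * w))) := by
  have hkernel : hankelKernel (β - ρ) w = hankelKernel β w * cexp (ρ * w) := by
    rw [hankelKernel, hankelKernel, ← Complex.exp_add]
    ring_nf
  have hdenom : cexp (ρ * w) - z = (1 - z * cexp (-(ρ * w))) * cexp (ρ * w) := by
    rw [sub_mul, mul_assoc, ← Complex.exp_add, neg_add_cancel, Complex.exp_zero, one_mul, mul_one]
  rw [mittagLefflerKernel, hkernel, hdenom, mul_div_mul_right _ _ (Complex.exp_ne_zero _)]

lemma hankelKernel_add_natCast_mul (ρ : ℝ) (β w : ℂ) (k : ℕ) :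
    hankelKernel (ρ * k + β) w = cexp (-(ρ * w)) ^ k * hankelKernel β w := by
  rw [hankelKernel, hankelKernel, ← Complex.exp_nat_mul, ← Complex.exp_add]
  ring_nf

theorem hasSum_hankelIntegral_mittagLefflerKernel {ρ : ℝ} (hρ : 0 ≤ ρ) (β : ℂ) {z : ℂ}
    (hz : ‖z‖ < rexp (ρ * c)) :
    HasSum (fun k : ℕ => z ^ k / Complex.Gamma (ρ * k + β))
      ((2 * π * I)⁻¹ * hankelIntegral (mittagLefflerKernel ρ β z) c) := by
  have hratio (w : ℂ) (hw : c ≤ w.re) : ‖z * cexp (-(ρ * w))‖ ≤ ‖z‖ * rexp (-(ρ * c)) := by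
    rw [norm_mul, Complex.norm_exp, Complex.neg_re, Complex.re_ofReal_mul]
    gcongr
  have hlt : ‖z‖ * rexp (-(ρ * c)) < 1 := by
    rwa [Real.exp_neg, ← div_eq_mul_inv, div_lt_one (exp_pos _)]
  have hupper : IntegrableOn (fun x : ℝ => hankelKernel β (x + π * I)) (Ioi c) := by
    simp_rw [hankelKernel_add_pi_mul_I]
    exact (integrableOn_cexp_neg_exp_add_mul _ c).mul_const _
  have hlower : IntegrableOn (fun x : ℝ => hankelKernel β (x - π * I)) (Ioi c) := by
    simp_rw [hankelKernel_sub_pi_mul_I]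
    exact (integrableOn_cexp_neg_exp_add_mul _ c).mul_const _
  have hsum := hasSum_hankelIntegral_geometric (differentiable_hankelKernel β).continuous
    (by fun_prop) hlt hratio hupper hlower
  simp_rw [← mittagLefflerKernel_eq_div_one_sub, mul_pow, mul_assoc,
    ← hankelKernel_add_natCast_mul, hankelIntegral_const_mul, hankelIntegral_hankelKernel] at hsum
  refine (hsum.mul_left (2 * π * I)⁻¹).congr_fun fun k => ?_
  rw [mul_left_comm, inv_mul_cancel_left₀ Complex.two_pi_I_ne_zero, div_eq_mul_inv]

/-- The two-parameter Mittag-Leffler function `E_{ρ,β}(z) = ∑_{k=0}^∞ z^k / Γ(ρk + β)`; the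
derivative of `E_ρ` is a multiple of `E_{ρ,ρ}`. -/
noncomputable def mittagLeffler₂ (ρ β z : ℝ) : ℝ := ∑' k : ℕ, z ^ k / Real.Gamma (ρ * k + β)

theorem ofReal_mittagLeffler₂ {ρ : ℝ} (hρ : 0 ≤ ρ) (β : ℝ) {z : ℝ} (hz : |z| < rexp (ρ * c)) :
    (mittagLeffler₂ ρ β z : ℂ) =
      (2 * π * I)⁻¹ * hankelIntegral (mittagLefflerKernel ρ β z) c := by
  rw [mittagLeffler₂, Complex.ofReal_tsum]
  refine ((hasSum_hankelIntegral_mittagLefflerKernel hρ β (z := z) (by simpa using hz)).congr_fun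
    fun k => ?_).tsum_eq
  push_cast [← Complex.Gamma_ofReal]
  rfl

lemma exists_lt_exp_mul {ρ : ℝ} (hρ : 0 < ρ) (y : ℝ) : ∃ c : ℝ, y < rexp (ρ * c) :=
  ((tendsto_exp_atTop.comp (tendsto_id.const_mul_atTop hρ)).eventually_gt_atTop y).exists

lemma summable_mittagLeffler₂ {ρ : ℝ} (hρ : 0 < ρ) (β z : ℝ) :
    Summable fun k : ℕ => z ^ k / Real.Gamma (ρ * k + β) := by
  obtain ⟨c, hc⟩ := exists_lt_exp_mul hρ |z|
  rw [← Complex.summable_ofReal]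
  refine ((hasSum_hankelIntegral_mittagLefflerKernel hρ.le β (z := z)
    (by simpa using hc)).summable).congr fun k => ?_
  push_cast [← Complex.Gamma_ofReal]
  rfl

lemma hasDerivAt_tsum_mul_pow {a : ℕ → ℝ}
    (ha : ∀ r : ℝ, Summable fun k : ℕ => (k + 1) * a (k + 1) * r ^ k) (z : ℝ) :
    HasDerivAt (fun z => ∑' k : ℕ, a k * z ^ k) (∑' k : ℕ, (k + 1) * a (k + 1) * z ^ k) z := by
  set R := |z| + 1
  have hz : z ∈ Metric.ball (0 : ℝ) R := by simp [R]
  have hbound : Summable fun k : ℕ => ‖a k * (k * R ^ (k - 1))‖ := by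
    refine (summable_nat_add_iff 1).1 ((ha R).norm.congr fun k => ?_)
    rw [Nat.add_sub_cancel, Nat.cast_succ]
    ring_nf
  have hterm (k : ℕ) (y : ℝ) (hy : y ∈ Metric.ball 0 R) :
      ‖a k * (k * y ^ (k - 1))‖ ≤ ‖a k * (k * R ^ (k - 1))‖ := by
    have hyR : ‖y‖ ≤ ‖R‖ := (mem_ball_zero_iff.1 hy).le.trans (le_abs_self R)
    simp only [norm_mul, norm_pow]
    gcongr
  have hderiv := hasDerivAt_tsum_of_isPreconnected hbound Metric.isOpen_ball
    (convex_ball (0 : ℝ) R).isPreconnected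
    (fun k y _ => (hasDerivAt_pow k y).const_mul (a k)) hterm
    (Metric.mem_ball_self (by positivity))
    (summable_of_ne_finset_zero (s := {0}) fun k hk => by simp_all) hz
  refine hderiv.congr_deriv ?_
  rw [(Summable.of_norm_bounded hbound fun k => hterm k z hz).tsum_eq_zero_add, Nat.cast_zero,
    zero_mul, mul_zero, zero_add]
  refine tsum_congr fun k => ?_
  rw [Nat.add_sub_cancel, Nat.cast_succ]
  ring

theorem hasDerivAt_mittagLeffler {ρ : ℝ} (hρ : 0 < ρ) (z : ℝ) :
    HasDerivAt (mittagLeffler ρ) (mittagLeffler₂ ρ ρ z / ρ) z := by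
  have hcoeff (k : ℕ) (z : ℝ) : (k + 1) * (Real.Gamma (ρ * ↑(k + 1) + 1))⁻¹ * z ^ k =
      ρ⁻¹ * (z ^ k / Real.Gamma (ρ * k + ρ)) := by
    have hk : ρ * ↑(k + 1) ≠ 0 := by positivity
    rw [Real.Gamma_add_one hk]
    push_cast
    field_simp
  have hsummable (r : ℝ) :
      Summable fun k : ℕ => (k + 1) * (Real.Gamma (ρ * ↑(k + 1) + 1))⁻¹ * r ^ k := by
    simp_rw [hcoeff]
    exact (summable_mittagLeffler₂ hρ ρ r).mul_left ρ⁻¹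
  have hderiv := hasDerivAt_tsum_mul_pow (a := fun k => (Real.Gamma (ρ * k + 1))⁻¹) hsummable z
  simp_rw [hcoeff, tsum_mul_left, ← div_eq_inv_mul] at hderiv
  exact hderiv

lemma cexp_mul_mem_slitPlane {ρ : ℝ} (hρ : |ρ| < 1) {w : ℂ} (hw : w ∈ slitStrip) :
    cexp (ρ * w) ∈ Complex.slitPlane := by
  have him : |(ρ * w).im| < π := by
    rw [Complex.im_ofReal_mul, abs_mul]
    calc |ρ| * |w.im| ≤ |ρ| * π := by gcongr; exact abs_le.2 hw
      _ < π := mul_lt_of_lt_one_left pi_pos hρ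
  obtain ⟨hlower, hupper⟩ := abs_lt.1 him
  rw [Complex.exp_mem_slitPlane, (toIocMod_eq_self two_pi_pos).2 ⟨hlower, by linarith⟩]
  exact hupper.ne

lemma differentiableOn_mittagLefflerKernel {ρ : ℝ} (hρ : |ρ| < 1) (β : ℂ) {z : ℂ}
    (hz : z ∉ Complex.slitPlane) : DifferentiableOn ℂ (mittagLefflerKernel ρ β z) slitStrip :=
  (differentiable_hankelKernel _).differentiableOn.div (by fun_prop) fun _ hw =>
    sub_ne_zero.2 (ne_of_mem_of_not_mem (cexp_mul_mem_slitPlane hρ hw) hz)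

lemma tendsto_mittagLefflerKernel {ρ : ℝ} (hρ : 0 < ρ) {β z : ℂ} (hβ : β.re < 1 + ρ)
    (hz : z ≠ 0) : Tendsto (mittagLefflerKernel ρ β z) slitStripAtBot (𝓝 0) := by
  have hnum := tendsto_hankelKernel_of_re_lt_one (a := β - ρ) (by simp; linarith)
  have hdenom := (tendsto_cexp_mul_slitStripAtBot (b := ρ) (by simpa using hρ)).sub_const z
  have hquot := hnum.div hdenom (by simpa using hz)
  rwa [zero_div] at hquot

/-- The density `e^{-r} r^ρ / |r^ρ e^{iπρ} + X|²` of the real integral to which the Hankel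
representation of `E_{ρ,ρ}(-X)` collapses, where the squared modulus equals
`r^{2ρ} + 2 X r^ρ cos(πρ) + X²`. -/
noncomputable def mittagLefflerDensity (ρ X r : ℝ) : ℝ :=
  rexp (-r) * r ^ ρ / ‖(r ^ ρ : ℝ) * cexp (π * ρ * I) + X‖ ^ 2

lemma div_sub_div_conj (A : ℝ) {u : ℂ} (hu : u ≠ 0) :
    (-A : ℂ) / u - (-A : ℂ) / (starRingEnd ℂ u) = (2 * u.im * A / ‖u‖ ^ 2 : ℝ) * I := by
  have hconj : starRingEnd ℂ u ≠ 0 := (map_ne_zero _).2 hu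
  have hnorm : (‖u‖ ^ 2 : ℂ) ≠ 0 := by simpa using hu
  rw [div_sub_div _ _ hu hconj, Complex.mul_conj']
  push_cast
  rw [div_mul_eq_mul_div, div_left_inj' hnorm]
  have hsub := Complex.sub_conj u
  push_cast at hsub
  linear_combination (A : ℂ) * hsub

lemma edgeJump_mittagLefflerKernel {ρ X : ℝ} (hρ : |ρ| < 1) (hX : 0 ≤ X) (x : ℝ) :
    edgeJump (mittagLefflerKernel ρ ρ (-X)) x =
      (rexp x • mittagLefflerDensity ρ X (rexp x) : ℝ) * (2 * Real.sin (π * ρ) * I) := by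
  set u : ℂ := (rexp x ^ ρ : ℝ) * cexp (π * ρ * I) + X
  have hupper : cexp (ρ * (x + π * I)) - (-X) = u := by
    simp only [u, sub_neg_eq_add, ← Real.exp_mul, Complex.ofReal_exp, ← Complex.exp_add]
    push_cast
    ring_nf
  have hlower : cexp (ρ * (x - π * I)) - (-X) = starRingEnd ℂ u := by
    rw [← hupper, map_sub, ← Complex.exp_conj]
    simp [sub_eq_add_neg]
  have hu : u ≠ 0 := by
    rw [← hupper]
    refine sub_ne_zero.2 (ne_of_mem_of_not_mem
      (cexp_mul_mem_slitPlane hρ (add_pi_mul_I_mem_slitStrip x)) ?_)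
    simpa [Complex.neg_ofReal_mem_slitPlane] using hX
  have him : u.im = rexp x ^ ρ * Real.sin (π * ρ) := by
    rw [Complex.add_im, Complex.im_ofReal_mul, ← Complex.ofReal_mul, Complex.exp_ofReal_mul_I_im,
      Complex.ofReal_im, add_zero]
  have hnum_upper : hankelKernel 0 (x + π * I) = -(rexp x * rexp (-rexp x) : ℝ) := by
    rw [hankelKernel, cexp_add_pi_mul_I, sub_zero, one_mul, Complex.exp_add, cexp_add_pi_mul_I]
    push_cast
    ring
  have hnum_lower : hankelKernel 0 (x - π * I) = -(rexp x * rexp (-rexp x) : ℝ) := by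
    rw [hankelKernel, cexp_sub_pi_mul_I, sub_zero, one_mul, Complex.exp_add, cexp_sub_pi_mul_I]
    push_cast
    ring
  rw [edgeJump, mittagLefflerKernel, mittagLefflerKernel, hupper, hlower, sub_self, hnum_upper,
    hnum_lower, div_sub_div_conj _ hu, him, mittagLefflerDensity, smul_eq_mul]
  push_cast
  ring

/-! ### The integral representation on the negative real axis -/

lemma sin_pi_mul_pos {ρ : ℝ} (hρ : 0 < ρ) (hρ' : ρ < 1) : 0 < Real.sin (π * ρ) :=
  sin_pos_of_pos_of_lt_pi (by positivity) (mul_lt_of_lt_one_right pi_pos hρ')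

lemma sq_mul_sin_le_sq_norm_ofReal_mul_cexp_add (q X θ : ℝ) :
    (X * Real.sin θ) ^ 2 ≤ ‖(q : ℂ) * cexp (θ * I) + X‖ ^ 2 := by
  have hnorm : ‖(q : ℂ) * cexp (θ * I) + X‖ ^ 2 =
      (q + X * Real.cos θ) ^ 2 + (X * Real.sin θ) ^ 2 := by
    rw [Complex.sq_norm, Complex.normSq_apply, Complex.add_re, Complex.add_im,
      Complex.re_ofReal_mul, Complex.im_ofReal_mul, Complex.exp_ofReal_mul_I_re,
      Complex.exp_ofReal_mul_I_im, Complex.ofReal_re, Complex.ofReal_im]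
    linear_combination (q ^ 2 - X ^ 2) * Real.sin_sq_add_cos_sq θ
  rw [hnorm]
  exact le_add_of_nonneg_left (sq_nonneg _)

lemma norm_ofReal_mul_cexp_add_le {q X : ℝ} (hq : 0 ≤ q) (hX : 0 ≤ X) (θ : ℝ) :
    ‖(q : ℂ) * cexp (θ * I) + X‖ ≤ q + X := by
  refine (norm_add_le _ _).trans_eq ?_
  rw [norm_mul, Complex.norm_exp_ofReal_mul_I, mul_one, Complex.norm_of_nonneg hq,
    Complex.norm_of_nonneg hX]

lemma integrableOn_mittagLefflerDensity {ρ X : ℝ} (hρ : 0 < ρ) (hρ' : ρ < 1) (hX : 0 < X) :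
    IntegrableOn (mittagLefflerDensity ρ X) (Ioi 0) := by
  have hsin_pos : 0 < (X * Real.sin (π * ρ)) ^ 2 := by
    have hsin := sin_pi_mul_pos hρ hρ'
    positivity
  have hgamma : IntegrableOn (fun r : ℝ => rexp (-r) * r ^ ρ) (Ioi 0) := by
    simpa using Real.GammaIntegral_convergent (s := ρ + 1) (by linarith)
  refine (hgamma.div_const ((X * Real.sin (π * ρ)) ^ 2)).mono' ?_ ?_
  · refine Measurable.aestronglyMeasurable ?_
    unfold mittagLefflerDensity
    fun_prop
  · filter_upwards [ae_restrict_mem measurableSet_Ioi] with r (hr : 0 < r)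
    rw [mittagLefflerDensity, Real.norm_of_nonneg (by positivity)]
    refine div_le_div_of_nonneg_left (by positivity) hsin_pos ?_
    simpa using sq_mul_sin_le_sq_norm_ofReal_mul_cexp_add (r ^ ρ) X (π * ρ)

theorem mittagLeffler₂_neg_eq_integral {ρ X : ℝ} (hρ : 0 < ρ) (hρ' : ρ < 1) (hX : 0 < X) :
    mittagLeffler₂ ρ ρ (-X) =
      Real.sin (π * ρ) / π * ∫ r in Ioi 0, mittagLefflerDensity ρ X r := by
  obtain ⟨c, hc⟩ := exists_lt_exp_mul hρ |-X|
  have hρ_abs : |ρ| < 1 := by rwa [abs_of_pos hρ]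
  have hX_notMem : (-X : ℂ) ∉ Complex.slitPlane := by
    simpa [Complex.neg_ofReal_mem_slitPlane] using hX.le
  have hjump := funext (edgeJump_mittagLefflerKernel hρ_abs hX.le)
  have hdensity := (integrable_exp_smul_comp_exp_iff _).2
    (integrableOn_mittagLefflerDensity hρ hρ' hX)
  have hcollapse : hankelIntegral (mittagLefflerKernel ρ ρ (-X)) c =
      ((∫ r in Ioi 0, mittagLefflerDensity ρ X r : ℝ) : ℂ) * (2 * Real.sin (π * ρ) * I) := by
    rw [hankelIntegral_eq_of_tendsto (differentiableOn_mittagLefflerKernel hρ_abs ρ hX_notMem)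
      (hjump ▸ hdensity.ofReal.mul_const _)
      (tendsto_mittagLefflerKernel hρ (by simp) (by simpa using hX.ne')), hjump,
      integral_mul_const, integral_complex_ofReal, integral_exp_smul_comp_exp, mul_zero, zero_add]
  have hreal := ofReal_mittagLeffler₂ hρ.le ρ hc
  push_cast [hcollapse] at hreal
  rw [← Complex.ofReal_inj, hreal]
  push_cast
  field_simp [Complex.I_ne_zero, pi_ne_zero]

/-! ### The lower bound -/

lemma one_sub_two_mul_le_inv_one_add_sq {y : ℝ} (hy : 0 ≤ y) : 1 - 2 * y ≤ ((1 + y) ^ 2)⁻¹ := by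
  rw [← one_div, le_div_iff₀ (by positivity)]
  nlinarith [sq_nonneg y, pow_nonneg hy 3]

lemma le_mittagLefflerDensity {ρ X r : ℝ} (hρ : 0 < ρ) (hρ' : ρ < 1) (hX : 0 < X) (hr : 0 ≤ r) :
    rexp (-r) * r ^ ρ / X ^ 2 - 2 * (rexp (-r) * r ^ (2 * ρ)) / X ^ 3 ≤
      mittagLefflerDensity ρ X r := by
  set q := r ^ ρ
  have hq : 0 ≤ q := rpow_nonneg hr ρ
  have hpow : r ^ (2 * ρ) = q ^ 2 := by
    rw [mul_comm, rpow_mul hr, rpow_two]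
  have hnorm_pos : 0 < ‖(q : ℂ) * cexp (π * ρ * I) + X‖ ^ 2 := by
    have hsin := sin_pi_mul_pos hρ hρ'
    refine lt_of_lt_of_le (by positivity : 0 < (X * Real.sin (π * ρ)) ^ 2) ?_
    simpa using sq_mul_sin_le_sq_norm_ofReal_mul_cexp_add q X (π * ρ)
  have hnorm_le : ‖(q : ℂ) * cexp (π * ρ * I) + X‖ ≤ q + X := by
    simpa using norm_ofReal_mul_cexp_add_le hq hX.le (π * ρ)
  calc rexp (-r) * q / X ^ 2 - 2 * (rexp (-r) * r ^ (2 * ρ)) / X ^ 3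
      = rexp (-r) * q / X ^ 2 * (1 - 2 * (q / X)) := by
        rw [hpow]
        field_simp
    _ ≤ rexp (-r) * q / X ^ 2 * ((1 + q / X) ^ 2)⁻¹ := by
        gcongr
        exact one_sub_two_mul_le_inv_one_add_sq (by positivity)
    _ = rexp (-r) * q / (q + X) ^ 2 := by
        field_simp
        ring
    _ ≤ mittagLefflerDensity ρ X r := by
        rw [mittagLefflerDensity]
        gcongr

lemma le_integral_mittagLefflerDensity {ρ X : ℝ} (hρ : 0 < ρ) (hρ' : ρ < 1) (hX : 0 < X) :
    Real.Gamma (ρ + 1) / X ^ 2 - 2 * Real.Gamma (2 * ρ + 1) / X ^ 3 ≤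
      ∫ r in Ioi 0, mittagLefflerDensity ρ X r := by
  have hgamma {s : ℝ} (hs : 0 < s) : IntegrableOn (fun r : ℝ => rexp (-r) * r ^ s) (Ioi 0) ∧
      ∫ r in Ioi 0, rexp (-r) * r ^ s = Real.Gamma (s + 1) := by
    have hs' : 0 < s + 1 := by positivity
    simpa using And.intro (Real.GammaIntegral_convergent hs') (Real.Gamma_eq_integral hs').symm
  obtain ⟨hint₁, hval₁⟩ := hgamma hρ
  obtain ⟨hint₂, hval₂⟩ := hgamma (s := 2 * ρ) (by positivity)
  rw [← hval₁, ← hval₂, ← integral_div, ← integral_const_mul, ← integral_div,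
    ← integral_sub (hint₁.div_const _) ((hint₂.const_mul 2).div_const _)]
  exact setIntegral_mono_on ((hint₁.div_const _).sub ((hint₂.const_mul 2).div_const _))
    (integrableOn_mittagLefflerDensity hρ hρ' hX) measurableSet_Ioi
    fun r hr => le_mittagLefflerDensity hρ hρ' hX (le_of_lt hr)

lemma sin_div_pi_mul_Gamma_add_one {ρ : ℝ} (hρ : 0 < ρ) (hρ' : ρ < 1) :
    Real.sin (π * ρ) / π * Real.Gamma (ρ + 1) = ρ / Real.Gamma (1 - ρ) := by
  have hGamma : Real.Gamma (1 - ρ) ≠ 0 := (Real.Gamma_pos_of_pos (by linarith)).ne'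
  have hsin := (sin_pi_mul_pos hρ hρ').ne'
  have hreflection := Real.Gamma_mul_Gamma_one_sub ρ
  rw [eq_div_iff hsin] at hreflection
  rw [Real.Gamma_add_one hρ.ne', div_mul_eq_mul_div, div_eq_div_iff pi_ne_zero hGamma]
  linear_combination ρ * hreflection

lemma Gamma_two_mul_add_one_le_two {ρ : ℝ} (hρ : 0 ≤ ρ) (hρ' : ρ ≤ 1) :
    Real.Gamma (2 * ρ + 1) ≤ 2 := by
  have hconvex := Real.convexOn_Gamma.2 (mem_Ioi.2 (one_pos : (0 : ℝ) < 1))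
    (mem_Ioi.2 (by norm_num : (0 : ℝ) < 3)) (sub_nonneg.2 hρ') hρ (sub_add_cancel 1 ρ)
  have hGamma_three : Real.Gamma 3 = 2 := by simp [Real.Gamma_ofNat_eq_factorial]
  simp only [smul_eq_mul, Real.Gamma_one, hGamma_three] at hconvex
  rw [show (1 - ρ) * 1 + ρ * 3 = 2 * ρ + 1 by ring] at hconvex
  linarith

theorem lt_mittagLeffler₂_neg {ρ X : ℝ} (hρ : 0 < ρ) (hρ' : ρ < 1) (hX : 0 < X) :
    ρ / (X ^ 2 * Real.Gamma (1 - ρ)) - 4 * ρ / X ^ 3 < mittagLeffler₂ ρ ρ (-X) := by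
  have hsin : Real.sin (π * ρ) / π < ρ := by
    rw [div_lt_iff₀' pi_pos]
    exact Real.sin_lt (by positivity)
  have hsin_pos : 0 < Real.sin (π * ρ) / π := div_pos (sin_pi_mul_pos hρ hρ') pi_pos
  have herror : Real.sin (π * ρ) / π * Real.Gamma (2 * ρ + 1) < ρ * 2 :=
    mul_lt_mul hsin (Gamma_two_mul_add_one_le_two hρ.le hρ'.le)
      (Real.Gamma_pos_of_pos (by positivity)) hρ.le
  calc ρ / (X ^ 2 * Real.Gamma (1 - ρ)) - 4 * ρ / X ^ 3
      = ρ / Real.Gamma (1 - ρ) / X ^ 2 - 2 * (ρ * 2) / X ^ 3 := by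
        rw [div_div, mul_comm (X ^ 2)]
        ring
    _ < Real.sin (π * ρ) / π * Real.Gamma (ρ + 1) / X ^ 2 -
          2 * (Real.sin (π * ρ) / π * Real.Gamma (2 * ρ + 1)) / X ^ 3 := by
        rw [sin_div_pi_mul_Gamma_add_one hρ hρ']
        gcongr
    _ = Real.sin (π * ρ) / π *
          (Real.Gamma (ρ + 1) / X ^ 2 - 2 * Real.Gamma (2 * ρ + 1) / X ^ 3) := by ring
    _ ≤ mittagLeffler₂ ρ ρ (-X) := by
        rw [mittagLeffler₂_neg_eq_integral hρ hρ' hX]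
        gcongr
        exact le_integral_mittagLefflerDensity hρ hρ' hX

lemma hasDerivAt_mittagLeffler_neg_rpow_mul {ρ lam : ℝ} (hρ : 0 < ρ) (hlam : 0 < lam) (T σ : ℝ) :
    HasDerivAt (fun σ : ℝ => mittagLeffler ρ (-(lam ^ σ * T)))
      (-(lam ^ σ * T * Real.log lam / ρ * mittagLeffler₂ ρ ρ (-(lam ^ σ * T)))) σ := by
  have hinner : HasDerivAt (fun σ : ℝ => -(lam ^ σ * T)) (-(lam ^ σ * Real.log lam * T)) σ :=
    ((Real.hasStrictDerivAt_const_rpow hlam σ).hasDerivAt.mul_const T).fun_neg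
  have hcomp := HasDerivAt.comp (h₂ := mittagLeffler ρ) σ (hasDerivAt_mittagLeffler hρ _) hinner
  exact hcomp.congr_deriv (by ring)

theorem stmt9_general (ρ t₀ lam : ℝ) (hρ : 0 < ρ) (hρ' : ρ < 1) (ht₀ : 1 ≤ t₀) (hlam : 1 < lam)
    (σ : ℝ) :
    DifferentiableAt ℝ (fun σ : ℝ => mittagLeffler ρ (-(lam ^ σ * t₀ ^ ρ))) σ ∧
      deriv (fun σ : ℝ => mittagLeffler ρ (-(lam ^ σ * t₀ ^ ρ))) σ <
        -(Real.log lam) / (lam ^ σ * t₀ ^ ρ * Real.Gamma (1 - ρ)) +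
          (4 * Real.log lam) / (lam ^ (2 * σ) * t₀ ^ ρ) := by
  have hlam_pos : 0 < lam := one_pos.trans hlam
  have hlog : 0 < Real.log lam := Real.log_pos hlam
  have hT : 1 ≤ t₀ ^ ρ := Real.one_le_rpow ht₀ hρ.le
  set X := lam ^ σ * t₀ ^ ρ
  have hX : 0 < X := by positivity
  have hderiv := hasDerivAt_mittagLeffler_neg_rpow_mul hρ hlam_pos (t₀ ^ ρ) σ
  refine ⟨hderiv.differentiableAt, ?_⟩
  have hpow : lam ^ (2 * σ) * t₀ ^ ρ ≤ X ^ 2 := by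
    rw [mul_comm 2 σ, rpow_mul hlam_pos.le, rpow_two, mul_pow]
    gcongr
    exact le_self_pow₀ hT two_ne_zero
  calc deriv (fun σ : ℝ => mittagLeffler ρ (-(lam ^ σ * t₀ ^ ρ))) σ
      = -(X * Real.log lam / ρ * mittagLeffler₂ ρ ρ (-X)) := hderiv.deriv
    _ < -(X * Real.log lam / ρ * (ρ / (X ^ 2 * Real.Gamma (1 - ρ)) - 4 * ρ / X ^ 3)) := by
        gcongr
        exact lt_mittagLeffler₂_neg hρ hρ' hX
    _ = -(Real.log lam) / (X * Real.Gamma (1 - ρ)) + 4 * Real.log lam / X ^ 2 := by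
        have hGamma := (Real.Gamma_pos_of_pos (sub_pos.2 hρ')).ne'
        field_simp
        ring
    _ ≤ _ := by gcongr

end

/-- For `ρ ∈ (0,1)`, `t₀ > 1`, `λ > 1` and `σ ∈ (0,1)`, the function
`σ ↦ E_ρ(−λ^σ t₀^ρ)` is differentiable at `σ` with
`d/dσ E_ρ(−λ^σ t₀^ρ) < −ln λ/(λ^σ t₀^ρ Γ(1−ρ)) + 5 ln λ/(λ^{2σ} t₀^ρ)`. -/
theorem stmt9 (ρ t₀ lam : ℝ) (hρ : 0 < ρ) (hρ' : ρ < 1) (ht₀ : 1 < t₀) (hlam : 1 < lam) :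
    ∀ σ ∈ Set.Ioo (0 : ℝ) 1,
      DifferentiableAt ℝ (fun σ : ℝ => mittagLeffler ρ (-(lam ^ σ * t₀ ^ ρ))) σ ∧
      deriv (fun σ : ℝ => mittagLeffler ρ (-(lam ^ σ * t₀ ^ ρ))) σ <
        -(Real.log lam) / (lam ^ σ * t₀ ^ ρ * Real.Gamma (1 - ρ)) +
          (5 * Real.log lam) / (lam ^ (2 * σ) * t₀ ^ ρ) := by
  intro σ _
  obtain ⟨hdiff, hlt⟩ := stmt9_general ρ t₀ lam hρ hρ' ht₀.le hlam σ
  exact ⟨hdiff, hlt.trans (by have := Real.log_pos hlam; gcongr; norm_num)⟩
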